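/- Eta-expansion in strongly focalised DAFoc: for every type A, the unfocused sequent vec(A) ⊢ A is derivable in the strongly focalised calculus DAFoc (in particular vec(P) ⊢ P for every positive-output type P and vec(N) ⊢ N for every negative-output type N). -/

import Mathlib

/-!
Formalisation of the displacement calculus with additives DA, the weakly
focalised calculus DAf (with and without Cut) and the strongly focalised
calculus DAFoc, following Morrill–Valentín.
-/

namespace DA

/-- Bias of atomic types. -/
inductive Bias : Type where
  | pos
  | neg
deriving DecidableEq

/-- Types of the displacement calculus with additives, indexed by their sort. -/
inductive Ty : ℕ → Type where
  | atom (b : Bias) (name : ℕ) (i : ℕ) : Ty i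
  | over {i j : ℕ} : Ty (i + j) → Ty j → Ty i                                   -- C / B
  | under {i j : ℕ} : Ty i → Ty (i + j) → Ty j                                  -- A \ C
  | prod {i j : ℕ} : Ty i → Ty j → Ty (i + j)                                   -- A • B
  | unitI : Ty 0                                                                -- I
  | circ {i j : ℕ} (k : ℕ) (hk : 1 ≤ k ∧ k ≤ i + 1) : Ty (i + j) → Ty j → Ty (i + 1)   -- C ↑ₖ B
  | infx {i j : ℕ} (k : ℕ) (hk : 1 ≤ k ∧ k ≤ i + 1) : Ty (i + 1) → Ty (i + j) → Ty j   -- A ↓ₖ C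
  | wprod {i j : ℕ} (k : ℕ) (hk : 1 ≤ k ∧ k ≤ i + 1) : Ty (i + 1) → Ty j → Ty (i + j)  -- A ⊙ₖ B
  | unitJ : Ty 1                                                                -- J
  | amp {i : ℕ} : Ty i → Ty i → Ty i                                            -- A & B
  | oplus {i : ℕ} : Ty i → Ty i → Ty i                                          -- A ⊕ B

/-- `posb A = true` iff `A` is synchronous as an output (positive output /
asynchronous as an input): positive atoms and `•`, `I`, `⊙ₖ`, `J`, `⊕`.
Otherwise `A` is synchronous as an input (negative atoms and `/`, `\`, `↑ₖ`,
`↓ₖ`, `&`). -/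
def posb {i : ℕ} : Ty i → Bool
  | .atom .pos _ _ => true
  | .atom .neg _ _ => false
  | .over _ _ => false
  | .under _ _ => false
  | .prod _ _ => true
  | .unitI => true
  | .circ _ _ _ _ => false
  | .infx _ _ _ _ => false
  | .wprod _ _ _ _ => true
  | .unitJ => true
  | .amp _ _ => false
  | .oplus _ _ => true

def isAtom {i : ℕ} : Ty i → Bool
  | .atom _ _ _ => true
  | _ => false

/-- Elements of configurations: the separator `1`, types of sort 0, and
figures `A{Δ₁ : … : Δ_{sA}}` of types of sort `> 0`; together with *boxed*
(focalised) variants of the latter two, used by the focalised calculi. -/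
inductive BTree : Type where
  | sep : BTree
  | type0 : Ty 0 → BTree
  | btype0 : Ty 0 → BTree
  | fig {i : ℕ} : Ty (i + 1) → (Fin (i + 1) → List BTree) → BTree
  | bfig {i : ℕ} : Ty (i + 1) → (Fin (i + 1) → List BTree) → BTree

/-- Configurations (possibly containing boxed, i.e. focalised, occurrences). -/
abbrev BConfig := List BTree

/-- The figure `vec(A)` of a type `A`. -/
def vecT {i : ℕ} (A : Ty i) : BTree :=
  match i, A with
  | 0, A => .type0 A
  | _ + 1, A => .fig A (fun _ => [BTree.sep])

def vec {i : ℕ} (A : Ty i) : BConfig := [vecT A]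

/-- The boxed (focalised) figure `[vec(A)]` of a type `A`. -/
def bvecT {i : ℕ} (A : Ty i) : BTree :=
  match i, A with
  | 0, A => .btype0 A
  | _ + 1, A => .bfig A (fun _ => [BTree.sep])

def bvec {i : ℕ} (A : Ty i) : BConfig := [bvecT A]

/-- The premise occurrence of an active antecedent subformula in a synchronous
rule: focalised (boxed) if it is synchronous in the antecedent (negative),
unfocalised if asynchronous (positive). -/
def fvec {i : ℕ} (A : Ty i) : BConfig := if posb A then vec A else bvec A

/-! Sort of a tree / configuration: its number of separators. -/
mutual
  inductive TreeSort : BTree → ℕ → Prop where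
    | sep : TreeSort .sep 1
    | type0 (A : Ty 0) : TreeSort (.type0 A) 0
    | btype0 (A : Ty 0) : TreeSort (.btype0 A) 0
    | fig {i : ℕ} (A : Ty (i + 1)) (args : Fin (i + 1) → BConfig) (ns : Fin (i + 1) → ℕ) :
        (∀ k, ConfigSort (args k) (ns k)) → TreeSort (.fig A args) (Finset.univ.sum ns)
    | bfig {i : ℕ} (A : Ty (i + 1)) (args : Fin (i + 1) → BConfig) (ns : Fin (i + 1) → ℕ) :
        (∀ k, ConfigSort (args k) (ns k)) → TreeSort (.bfig A args) (Finset.univ.sum ns)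
  inductive ConfigSort : BConfig → ℕ → Prop where
    | nil : ConfigSort [] 0
    | cons {t : BTree} {ts : BConfig} {n m : ℕ} :
        TreeSort t n → ConfigSort ts m → ConfigSort (t :: ts) (n + m)
end

/-! Number of boxed (focalised) formula occurrences in a tree / configuration. -/
mutual
  inductive TBoxes : BTree → ℕ → Prop where
    | sep : TBoxes .sep 0
    | type0 (A : Ty 0) : TBoxes (.type0 A) 0
    | btype0 (A : Ty 0) : TBoxes (.btype0 A) 1
    | fig {i : ℕ} (A : Ty (i + 1)) (args : Fin (i + 1) → BConfig) (ns : Fin (i + 1) → ℕ) :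
        (∀ k, CBoxes (args k) (ns k)) → TBoxes (.fig A args) (Finset.univ.sum ns)
    | bfig {i : ℕ} (A : Ty (i + 1)) (args : Fin (i + 1) → BConfig) (ns : Fin (i + 1) → ℕ) :
        (∀ k, CBoxes (args k) (ns k)) → TBoxes (.bfig A args) (Finset.univ.sum ns + 1)
  inductive CBoxes : BConfig → ℕ → Prop where
    | nil : CBoxes [] 0
    | cons {t : BTree} {ts : BConfig} {n m : ℕ} :
        TBoxes t n → CBoxes ts m → CBoxes (t :: ts) (n + m)
end

/-! The fold `Γ ⊗ ⟨Δ₁ : … : Δ_i⟩`: `FoldC Γ [Δ₁,…,Δ_i] res` holds iff `res` is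
the result of replacing the successive separators of `Γ` by `Δ₁,…,Δ_i`. -/
mutual
  inductive FoldT : BTree → List BConfig → BConfig → Prop where
    | sep (Δ : BConfig) : FoldT .sep [Δ] Δ
    | type0 (A : Ty 0) : FoldT (.type0 A) [] [.type0 A]
    | btype0 (A : Ty 0) : FoldT (.btype0 A) [] [.btype0 A]
    | fig {i : ℕ} (A : Ty (i + 1)) (args args' : Fin (i + 1) → BConfig)
        (reps : Fin (i + 1) → List BConfig) :
        (∀ k, FoldC (args k) (reps k) (args' k)) →
        FoldT (.fig A args) (List.ofFn reps).flatten [.fig A args']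
    | bfig {i : ℕ} (A : Ty (i + 1)) (args args' : Fin (i + 1) → BConfig)
        (reps : Fin (i + 1) → List BConfig) :
        (∀ k, FoldC (args k) (reps k) (args' k)) →
        FoldT (.bfig A args) (List.ofFn reps).flatten [.bfig A args']
  inductive FoldC : BConfig → List BConfig → BConfig → Prop where
    | nil : FoldC [] [] []
    | cons {t : BTree} {ts : BConfig} {r1 r2 : List BConfig} {c1 c2 : BConfig} :
        FoldT t r1 c1 → FoldC ts r2 c2 → FoldC (t :: ts) (r1 ++ r2) (c1 ++ c2)
end

/-- The `k`-th metalinguistic wrap `Δ |ₖ Γ`: `Wrap Δ k Γ res` holds iff `res`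
is the result of replacing the `k`-th separator of `Δ` by `Γ`. -/
def Wrap (Δ : BConfig) (k : ℕ) (Γ res : BConfig) : Prop :=
  ∃ n : ℕ, ConfigSort Δ n ∧
    FoldC Δ ((List.replicate n ([BTree.sep] : BConfig)).set (k - 1) Γ) res

/-! One-hole contexts `Δ₀(—)` for configurations: the hole is a configuration
position, either at the top level or nested inside a figure argument. -/
mutual
  inductive THole : Type where
    | fig {i : ℕ} (A : Ty (i + 1)) (args : Fin (i + 1) → BConfig) (k : Fin (i + 1))
        (c : CHole) : THole
    | bfig {i : ℕ} (A : Ty (i + 1)) (args : Fin (i + 1) → BConfig) (k : Fin (i + 1))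
        (c : CHole) : THole
  inductive CHole : Type where
    | top (pre post : BConfig) : CHole
    | deep (pre : BConfig) (t : THole) (post : BConfig) : CHole
end

/-! Plugging a configuration into a one-hole context. -/
mutual
  inductive PlugT : THole → BConfig → BTree → Prop where
    | fig {i : ℕ} (A : Ty (i + 1)) (args : Fin (i + 1) → BConfig) (k : Fin (i + 1))
        (c : CHole) (Γ plugged : BConfig) :
        PlugC c Γ plugged → PlugT (.fig A args k c) Γ (.fig A (Function.update args k plugged))
    | bfig {i : ℕ} (A : Ty (i + 1)) (args : Fin (i + 1) → BConfig) (k : Fin (i + 1))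
        (c : CHole) (Γ plugged : BConfig) :
        PlugC c Γ plugged → PlugT (.bfig A args k c) Γ (.bfig A (Function.update args k plugged))
  inductive PlugC : CHole → BConfig → BConfig → Prop where
    | top (pre post Γ : BConfig) : PlugC (.top pre post) Γ (pre ++ Γ ++ post)
    | deep (pre post Γ : BConfig) (t : THole) (tr : BTree) :
        PlugT t Γ tr → PlugC (.deep pre t post) Γ (pre ++ tr :: post)
end

/-- The data `Δ⟨—⟩ = Δ₀(— ⊗ ⟨Δ₁ : … : Δ_i⟩)` of a context in the generalised
sense of the displacement calculus. -/
structure Zone : Type where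
  hole : CHole
  reps : List BConfig

/-- `Sub Z Γ res` holds iff `res = Δ⟨Γ⟩` for the context `Δ⟨—⟩` given by `Z`,
i.e. `res = Δ₀(Γ ⊗ ⟨Δ₁ : … : Δ_i⟩)`. -/
def Sub (Z : Zone) (Γ res : BConfig) : Prop :=
  ∃ folded : BConfig, FoldC Γ Z.reps folded ∧ PlugC Z.hole folded res

/-- The displacement calculus with additives DA: `DADeriv Δ i A` is
derivability of the sequent `Δ ⇒ A` (identity axiom restricted to atoms). -/
inductive DADeriv : BConfig → ∀ i : ℕ, Ty i → Prop where
  | id (b : Bias) (name i : ℕ) :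
      DADeriv (vec (.atom b name i)) i (.atom b name i)
  | overR {i j : ℕ} {Γ : BConfig} {C : Ty (i + j)} {B : Ty j} :
      DADeriv (Γ ++ vec B) (i + j) C → DADeriv Γ i (.over C B)
  | overL {i j d : ℕ} {Γ s1 s2 : BConfig} {B : Ty j} {C : Ty (i + j)} {Z : Zone} {D : Ty d} :
      DADeriv Γ j B → Sub Z (vec C) s1 → DADeriv s1 d D →
      Sub Z (vec (.over C B) ++ Γ) s2 → DADeriv s2 d D
  | underR {i j : ℕ} {Γ : BConfig} {A : Ty i} {C : Ty (i + j)} :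
      DADeriv (vec A ++ Γ) (i + j) C → DADeriv Γ j (.under A C)
  | underL {i j d : ℕ} {Γ s1 s2 : BConfig} {A : Ty i} {C : Ty (i + j)} {Z : Zone} {D : Ty d} :
      DADeriv Γ i A → Sub Z (vec C) s1 → DADeriv s1 d D →
      Sub Z (Γ ++ vec (.under A C)) s2 → DADeriv s2 d D
  | prodR {i j : ℕ} {Γ1 Γ2 : BConfig} {A : Ty i} {B : Ty j} :
      DADeriv Γ1 i A → DADeriv Γ2 j B → DADeriv (Γ1 ++ Γ2) (i + j) (.prod A B)
  | prodL {i j d : ℕ} {s1 s2 : BConfig} {A : Ty i} {B : Ty j} {Z : Zone} {D : Ty d} :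
      Sub Z (vec A ++ vec B) s1 → DADeriv s1 d D →
      Sub Z (vec (.prod A B)) s2 → DADeriv s2 d D
  | unitIR : DADeriv [] 0 .unitI
  | unitIL {d : ℕ} {s1 s2 : BConfig} {Z : Zone} {D : Ty d} :
      Sub Z [] s1 → DADeriv s1 d D → Sub Z (vec .unitI) s2 → DADeriv s2 d D
  | circR {i j : ℕ} (k : ℕ) (hk : 1 ≤ k ∧ k ≤ i + 1) {Γ w : BConfig}
      {C : Ty (i + j)} {B : Ty j} :
      Wrap Γ k (vec B) w → DADeriv w (i + j) C → DADeriv Γ (i + 1) (.circ k hk C B)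
  | circL {i j d : ℕ} (k : ℕ) (hk : 1 ≤ k ∧ k ≤ i + 1) {Γ w s1 s2 : BConfig}
      {C : Ty (i + j)} {B : Ty j} {Z : Zone} {D : Ty d} :
      DADeriv Γ j B → Sub Z (vec C) s1 → DADeriv s1 d D →
      Wrap (vec (Ty.circ k hk C B)) k Γ w → Sub Z w s2 → DADeriv s2 d D
  | infxR {i j : ℕ} (k : ℕ) (hk : 1 ≤ k ∧ k ≤ i + 1) {Γ w : BConfig}
      {A : Ty (i + 1)} {C : Ty (i + j)} :
      Wrap (vec A) k Γ w → DADeriv w (i + j) C → DADeriv Γ j (.infx k hk A C)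
  | infxL {i j d : ℕ} (k : ℕ) (hk : 1 ≤ k ∧ k ≤ i + 1) {Γ w s1 s2 : BConfig}
      {A : Ty (i + 1)} {C : Ty (i + j)} {Z : Zone} {D : Ty d} :
      DADeriv Γ (i + 1) A → Sub Z (vec C) s1 → DADeriv s1 d D →
      Wrap Γ k (vec (Ty.infx k hk A C)) w → Sub Z w s2 → DADeriv s2 d D
  | wprodR {i j : ℕ} (k : ℕ) (hk : 1 ≤ k ∧ k ≤ i + 1) {Γ1 Γ2 w : BConfig}
      {A : Ty (i + 1)} {B : Ty j} :
      DADeriv Γ1 (i + 1) A → DADeriv Γ2 j B → Wrap Γ1 k Γ2 w →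
      DADeriv w (i + j) (.wprod k hk A B)
  | wprodL {i j d : ℕ} (k : ℕ) (hk : 1 ≤ k ∧ k ≤ i + 1) {w s1 s2 : BConfig}
      {A : Ty (i + 1)} {B : Ty j} {Z : Zone} {D : Ty d} :
      Wrap (vec A) k (vec B) w → Sub Z w s1 → DADeriv s1 d D →
      Sub Z (vec (.wprod k hk A B)) s2 → DADeriv s2 d D
  | unitJR : DADeriv [BTree.sep] 1 .unitJ
  | unitJL {d : ℕ} {s1 s2 : BConfig} {Z : Zone} {D : Ty d} :
      Sub Z [BTree.sep] s1 → DADeriv s1 d D → Sub Z (vec .unitJ) s2 → DADeriv s2 d D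
  | ampR {i : ℕ} {Γ : BConfig} {A B : Ty i} :
      DADeriv Γ i A → DADeriv Γ i B → DADeriv Γ i (.amp A B)
  | ampL1 {i d : ℕ} {s1 s2 : BConfig} {A B : Ty i} {Z : Zone} {D : Ty d} :
      Sub Z (vec A) s1 → DADeriv s1 d D → Sub Z (vec (.amp A B)) s2 → DADeriv s2 d D
  | ampL2 {i d : ℕ} {s1 s2 : BConfig} {A B : Ty i} {Z : Zone} {D : Ty d} :
      Sub Z (vec B) s1 → DADeriv s1 d D → Sub Z (vec (.amp A B)) s2 → DADeriv s2 d D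
  | oplusR1 {i : ℕ} {Γ : BConfig} {A B : Ty i} :
      DADeriv Γ i A → DADeriv Γ i (.oplus A B)
  | oplusR2 {i : ℕ} {Γ : BConfig} {A B : Ty i} :
      DADeriv Γ i B → DADeriv Γ i (.oplus A B)
  | oplusL {i d : ℕ} {s1 s2 s3 : BConfig} {A B : Ty i} {Z : Zone} {D : Ty d} :
      Sub Z (vec A) s1 → DADeriv s1 d D → Sub Z (vec B) s2 → DADeriv s2 d D →
      Sub Z (vec (.oplus A B)) s3 → DADeriv s3 d D

/-! Occurrence of a type satisfying `φ` somewhere in a configuration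
(as the head type of a tree/figure, possibly nested). -/
mutual
  inductive TOcc (φ : ∀ j : ℕ, Ty j → Prop) : BTree → Prop where
    | type0 {A : Ty 0} : φ 0 A → TOcc φ (.type0 A)
    | btype0 {A : Ty 0} : φ 0 A → TOcc φ (.btype0 A)
    | figHead {i : ℕ} {A : Ty (i + 1)} {args : Fin (i + 1) → BConfig} :
        φ (i + 1) A → TOcc φ (.fig A args)
    | bfigHead {i : ℕ} {A : Ty (i + 1)} {args : Fin (i + 1) → BConfig} :
        φ (i + 1) A → TOcc φ (.bfig A args)
    | figArg {i : ℕ} {A : Ty (i + 1)} {args : Fin (i + 1) → BConfig} (k : Fin (i + 1)) :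
        COcc φ (args k) → TOcc φ (.fig A args)
    | bfigArg {i : ℕ} {A : Ty (i + 1)} {args : Fin (i + 1) → BConfig} (k : Fin (i + 1)) :
        COcc φ (args k) → TOcc φ (.bfig A args)
  inductive COcc (φ : ∀ j : ℕ, Ty j → Prop) : BConfig → Prop where
    | head {t : BTree} {ts : BConfig} : TOcc φ t → COcc φ (t :: ts)
    | tail {t : BTree} {ts : BConfig} : COcc φ ts → COcc φ (t :: ts)
end

/-- The sequent `Δ ⊢ A` contains a complex (non-atomic) asynchronous formula
occurrence: a non-atomic positive type in the antecedent, or a non-atomic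
negative succedent. -/
def HasComplexAsync (Δ : BConfig) (i : ℕ) (A : Ty i) : Prop :=
  COcc (fun _ B => posb B = true ∧ isAtom B = false) Δ ∨
    (posb A = false ∧ isAtom A = false)

/-- A sequent (antecedent plus succedent-focus flag) contains at most one
focalised formula. -/
def AtMostOne (Δ : BConfig) (f : Bool) : Prop :=
  if f then CBoxes Δ 0 else (CBoxes Δ 0 ∨ CBoxes Δ 1)

/-- A sequent contains exactly one focalised formula. -/
def ExactlyOne (Δ : BConfig) (f : Bool) : Prop :=
  if f then CBoxes Δ 0 else CBoxes Δ 1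

/-- Side condition of the strongly focalised calculus: a sequent containing a
focalised formula contains no complex asynchronous formula occurrence (and
vice versa). -/
def Ok (strong : Bool) (Δ : BConfig) (f : Bool) (i : ℕ) (A : Ty i) : Prop :=
  strong = true → ¬ ((f = true ∨ ¬ CBoxes Δ 0) ∧ HasComplexAsync Δ i A)

/-- Focalised sequent calculus: `DW cuts strong Δ f i A` is derivability of
the sequent `Δ ⊢ A`, whose succedent is focalised iff `f = true` and whose
focalised antecedent formulas are the boxed occurrences of `Δ`.
`cuts = true` allows the Cut rules (weakly focalised calculus DAf);
`cuts = false` is Cut-free DAf; `strong = true` additionally imposes the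
strong focalisation discipline (DAFoc, taken with `cuts = false`). -/
inductive DW (cuts strong : Bool) : BConfig → Bool → ∀ i : ℕ, Ty i → Prop where
  -- identity axioms, restricted to atoms
  | idP (name i : ℕ) :
      DW cuts strong (vec (.atom .pos name i)) true i (.atom .pos name i)
  | idQ (name i : ℕ) :
      DW cuts strong (bvec (.atom .neg name i)) false i (.atom .neg name i)
  -- focusing rules
  | focR {i : ℕ} {Δ : BConfig} {P : Ty i} :
      posb P = true →
      DW cuts strong Δ true i P →
      AtMostOne Δ false → Ok strong Δ false i P →
      DW cuts strong Δ false i P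
  | focL {j d : ℕ} {Q : Ty j} {D : Ty d} {Z : Zone} {s1 s2 : BConfig} :
      posb Q = false →
      Sub Z (bvec Q) s1 → DW cuts strong s1 false d D →
      Sub Z (vec Q) s2 → AtMostOne s2 false → Ok strong s2 false d D →
      DW cuts strong s2 false d D
  -- asynchronous right rules
  | overR {i j : ℕ} {Γ : BConfig} {C : Ty (i + j)} {B : Ty j} :
      DW cuts strong (Γ ++ vec B) false (i + j) C →
      AtMostOne Γ false → Ok strong Γ false i (.over C B) →
      DW cuts strong Γ false i (.over C B)
  | underR {i j : ℕ} {Γ : BConfig} {A : Ty i} {C : Ty (i + j)} :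
      DW cuts strong (vec A ++ Γ) false (i + j) C →
      AtMostOne Γ false → Ok strong Γ false j (.under A C) →
      DW cuts strong Γ false j (.under A C)
  | circR {i j : ℕ} (k : ℕ) (hk : 1 ≤ k ∧ k ≤ i + 1) {Γ w : BConfig}
      {C : Ty (i + j)} {B : Ty j} :
      Wrap Γ k (vec B) w → DW cuts strong w false (i + j) C →
      AtMostOne Γ false → Ok strong Γ false (i + 1) (.circ k hk C B) →
      DW cuts strong Γ false (i + 1) (.circ k hk C B)
  | infxR {i j : ℕ} (k : ℕ) (hk : 1 ≤ k ∧ k ≤ i + 1) {Γ w : BConfig}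
      {A : Ty (i + 1)} {C : Ty (i + j)} :
      Wrap (vec A) k Γ w → DW cuts strong w false (i + j) C →
      AtMostOne Γ false → Ok strong Γ false j (.infx k hk A C) →
      DW cuts strong Γ false j (.infx k hk A C)
  | ampR {i : ℕ} {Γ : BConfig} {A B : Ty i} :
      DW cuts strong Γ false i A → DW cuts strong Γ false i B →
      AtMostOne Γ false → Ok strong Γ false i (.amp A B) →
      DW cuts strong Γ false i (.amp A B)
  -- asynchronous left rules
  | prodL {i j d : ℕ} {f : Bool} {s1 s2 : BConfig} {A : Ty i} {B : Ty j}
      {Z : Zone} {D : Ty d} :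
      Sub Z (vec A ++ vec B) s1 → DW cuts strong s1 f d D →
      Sub Z (vec (.prod A B)) s2 → AtMostOne s2 f → Ok strong s2 f d D →
      DW cuts strong s2 f d D
  | unitIL {d : ℕ} {f : Bool} {s1 s2 : BConfig} {Z : Zone} {D : Ty d} :
      Sub Z [] s1 → DW cuts strong s1 f d D →
      Sub Z (vec .unitI) s2 → AtMostOne s2 f → Ok strong s2 f d D →
      DW cuts strong s2 f d D
  | wprodL {i j d : ℕ} (k : ℕ) (hk : 1 ≤ k ∧ k ≤ i + 1) {f : Bool}
      {w s1 s2 : BConfig} {A : Ty (i + 1)} {B : Ty j} {Z : Zone} {D : Ty d} :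
      Wrap (vec A) k (vec B) w → Sub Z w s1 → DW cuts strong s1 f d D →
      Sub Z (vec (.wprod k hk A B)) s2 → AtMostOne s2 f → Ok strong s2 f d D →
      DW cuts strong s2 f d D
  | unitJL {d : ℕ} {f : Bool} {s1 s2 : BConfig} {Z : Zone} {D : Ty d} :
      Sub Z [BTree.sep] s1 → DW cuts strong s1 f d D →
      Sub Z (vec .unitJ) s2 → AtMostOne s2 f → Ok strong s2 f d D →
      DW cuts strong s2 f d D
  | oplusL {i d : ℕ} {f : Bool} {s1 s2 s3 : BConfig} {A B : Ty i} {Z : Zone} {D : Ty d} :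
      Sub Z (vec A) s1 → DW cuts strong s1 f d D →
      Sub Z (vec B) s2 → DW cuts strong s2 f d D →
      Sub Z (vec (.oplus A B)) s3 → AtMostOne s3 f → Ok strong s3 f d D →
      DW cuts strong s3 f d D
  -- synchronous left rules (active formula focalised)
  | overL {i j d : ℕ} {Γ s1 s2 : BConfig} {B : Ty j} {C : Ty (i + j)} {Z : Zone} {D : Ty d} :
      DW cuts strong Γ (posb B) j B →
      Sub Z (fvec C) s1 → DW cuts strong s1 false d D →
      Sub Z (bvec (.over C B) ++ Γ) s2 → AtMostOne s2 false → Ok strong s2 false d D →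
      DW cuts strong s2 false d D
  | underL {i j d : ℕ} {Γ s1 s2 : BConfig} {A : Ty i} {C : Ty (i + j)} {Z : Zone} {D : Ty d} :
      DW cuts strong Γ (posb A) i A →
      Sub Z (fvec C) s1 → DW cuts strong s1 false d D →
      Sub Z (Γ ++ bvec (.under A C)) s2 → AtMostOne s2 false → Ok strong s2 false d D →
      DW cuts strong s2 false d D
  | circL {i j d : ℕ} (k : ℕ) (hk : 1 ≤ k ∧ k ≤ i + 1) {Γ w s1 s2 : BConfig}
      {C : Ty (i + j)} {B : Ty j} {Z : Zone} {D : Ty d} :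
      DW cuts strong Γ (posb B) j B →
      Sub Z (fvec C) s1 → DW cuts strong s1 false d D →
      Wrap (bvec (Ty.circ k hk C B)) k Γ w → Sub Z w s2 →
      AtMostOne s2 false → Ok strong s2 false d D →
      DW cuts strong s2 false d D
  | infxL {i j d : ℕ} (k : ℕ) (hk : 1 ≤ k ∧ k ≤ i + 1) {Γ w s1 s2 : BConfig}
      {A : Ty (i + 1)} {C : Ty (i + j)} {Z : Zone} {D : Ty d} :
      DW cuts strong Γ (posb A) (i + 1) A →
      Sub Z (fvec C) s1 → DW cuts strong s1 false d D →
      Wrap Γ k (bvec (Ty.infx k hk A C)) w → Sub Z w s2 →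
      AtMostOne s2 false → Ok strong s2 false d D →
      DW cuts strong s2 false d D
  | ampL1 {i d : ℕ} {s1 s2 : BConfig} {A B : Ty i} {Z : Zone} {D : Ty d} :
      Sub Z (fvec A) s1 → DW cuts strong s1 false d D →
      Sub Z (bvec (.amp A B)) s2 → AtMostOne s2 false → Ok strong s2 false d D →
      DW cuts strong s2 false d D
  | ampL2 {i d : ℕ} {s1 s2 : BConfig} {A B : Ty i} {Z : Zone} {D : Ty d} :
      Sub Z (fvec B) s1 → DW cuts strong s1 false d D →
      Sub Z (bvec (.amp A B)) s2 → AtMostOne s2 false → Ok strong s2 false d D →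
      DW cuts strong s2 false d D
  -- synchronous right rules (succedent focalised)
  | prodR {i j : ℕ} {Γ1 Γ2 : BConfig} {A : Ty i} {B : Ty j} :
      DW cuts strong Γ1 (posb A) i A → DW cuts strong Γ2 (posb B) j B →
      AtMostOne (Γ1 ++ Γ2) true → Ok strong (Γ1 ++ Γ2) true (i + j) (.prod A B) →
      DW cuts strong (Γ1 ++ Γ2) true (i + j) (.prod A B)
  | unitIR : DW cuts strong [] true 0 .unitI
  | wprodR {i j : ℕ} (k : ℕ) (hk : 1 ≤ k ∧ k ≤ i + 1) {Γ1 Γ2 w : BConfig}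
      {A : Ty (i + 1)} {B : Ty j} :
      DW cuts strong Γ1 (posb A) (i + 1) A → DW cuts strong Γ2 (posb B) j B →
      Wrap Γ1 k Γ2 w →
      AtMostOne w true → Ok strong w true (i + j) (.wprod k hk A B) →
      DW cuts strong w true (i + j) (.wprod k hk A B)
  | unitJR : DW cuts strong [BTree.sep] true 1 .unitJ
  | oplusR1 {i : ℕ} {Γ : BConfig} {A B : Ty i} :
      DW cuts strong Γ (posb A) i A →
      AtMostOne Γ true → Ok strong Γ true i (.oplus A B) →
      DW cuts strong Γ true i (.oplus A B)
  | oplusR2 {i : ℕ} {Γ : BConfig} {A B : Ty i} :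
      DW cuts strong Γ (posb B) i B →
      AtMostOne Γ true → Ok strong Γ true i (.oplus A B) →
      DW cuts strong Γ true i (.oplus A B)
  -- Cut rules (weakly focalised calculus only)
  | pcut1 {j d : ℕ} {f : Bool} {Γ s1 s2 : BConfig} {P : Ty j} {Z : Zone} {C : Ty d} :
      cuts = true → posb P = true →
      DW cuts strong Γ true j P →
      Sub Z (vec P) s1 → DW cuts strong s1 f d C →
      Sub Z Γ s2 → AtMostOne s2 f →
      DW cuts strong s2 f d C
  | pcut2 {j d : ℕ} {Γ s1 s2 : BConfig} {N : Ty j} {Z : Zone} {C : Ty d} :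
      cuts = true → posb N = false →
      DW cuts strong Γ false j N →
      Sub Z (bvec N) s1 → DW cuts strong s1 false d C →
      Sub Z Γ s2 → AtMostOne s2 false →
      DW cuts strong s2 false d C
  | ncut1 {j d : ℕ} {Γ s1 s2 : BConfig} {P : Ty j} {Z : Zone} {C : Ty d} :
      cuts = true → posb P = true →
      DW cuts strong Γ false j P →
      Sub Z (vec P) s1 → CBoxes s1 0 → DW cuts strong s1 false d C →
      Sub Z Γ s2 → AtMostOne s2 false →
      DW cuts strong s2 false d C
  | ncut2 {j d : ℕ} {f : Bool} {Γ s1 s2 : BConfig} {N : Ty j} {Z : Zone} {C : Ty d} :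
      cuts = true → posb N = false →
      CBoxes Γ 0 → DW cuts strong Γ false j N →
      Sub Z (vec N) s1 → DW cuts strong s1 f d C →
      Sub Z Γ s2 → AtMostOne s2 f →
      DW cuts strong s2 f d C

/-- The weakly focalised calculus DAf. -/
abbrev DAf (Δ : BConfig) (f : Bool) (i : ℕ) (A : Ty i) : Prop := DW true false Δ f i A

/-- Cut-free DAf. -/
abbrev DAfCutFree (Δ : BConfig) (f : Bool) (i : ℕ) (A : Ty i) : Prop := DW false false Δ f i A

/-- The strongly focalised calculus DAFoc. -/
abbrev DAFoc (Δ : BConfig) (f : Bool) (i : ℕ) (A : Ty i) : Prop := DW false true Δ f i A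

/-- Transport of a type along an equality of sorts. -/
def tcast {i j : ℕ} (h : i = j) (A : Ty i) : Ty j := h ▸ A

end DA

/-!
Every type is asynchronous on one of the two sides of `vec A ⊢ A`, and its asynchronous rules are
invertible. Decompose `A` on that side, and its asynchronous subformulas in turn, until no complex
asynchronous formula is left. This reduces `vec A ⊢ A` to sequents `X ⊢ A` if `A` is positive, and
to sequents `Δ⟨vec A⟩ ⊢ D` if `A` is negative. There the remaining occurrence of `A` may be
focused, the restriction of the strongly focalised calculus being met, and a synchronous rule
splits the sequent into sequents of the same kind for the immediate subformulas of `A`. So the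
induction on `A` has to establish these focused sequents together with `vec A ⊢ A`.

For the decomposition to take place inside a context, one needs that a configuration put next to
another one, or wrapped around it, or wrapped by it, yields a context for the latter. This comes
down to the associativity of the fold operation.
-/

namespace DA

/-! ### Configurations as forests -/

/-- The element of a configuration headed by an occurrence of `A`, boxed iff `boxed = true`; it
treats the types of sort `0` as figures without arguments. -/
def node (boxed : Bool) {i : ℕ} (A : Ty i) (args : Fin i → BConfig) : BTree :=
  match i, boxed, A, args with
  | 0, false, A, _ => .type0 A
  | 0, true, A, _ => .btype0 A
  | _ + 1, false, A, args => .fig A args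
  | _ + 1, true, A, args => .bfig A args

theorem vec_eq_node {i : ℕ} (A : Ty i) : vec A = [node false A fun _ => [.sep]] := by
  cases i <;> rfl

theorem bvec_eq_node {i : ℕ} (A : Ty i) : bvec A = [node true A fun _ => [.sep]] := by
  cases i <;> rfl

@[elab_as_elim]
theorem config_induction {motive : BConfig → Prop} (nil : motive [])
    (sep : ∀ Γ, motive Γ → motive (.sep :: Γ))
    (node : ∀ (boxed : Bool) {i : ℕ} (A : Ty i) (args : Fin i → BConfig) (Γ : BConfig),
      (∀ k, motive (args k)) → motive Γ → motive (node boxed A args :: Γ))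
    (Γ : BConfig) : motive Γ :=
  BTree.rec_1 (motive_1 := fun t => ∀ Γ, motive Γ → motive (t :: Γ)) (motive_2 := motive)
    sep (fun A Γ hΓ => node false A nofun Γ nofun hΓ) (fun A Γ hΓ => node true A nofun Γ nofun hΓ)
    (fun A args hargs Γ hΓ => node false A args Γ hargs hΓ)
    (fun A args hargs Γ hΓ => node true A args Γ hargs hΓ)
    nil (fun _ Γ ht hΓ => ht Γ hΓ) Γ

theorem TreeSort.node (boxed : Bool) {i : ℕ} (A : Ty i) {args : Fin i → BConfig}
    {ns : Fin i → ℕ} (h : ∀ k, ConfigSort (args k) (ns k)) :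
    TreeSort (node boxed A args) (∑ k, ns k) := by
  rcases i with - | i <;> cases boxed
  exacts [.type0 A, .btype0 A, .fig A args ns h, .bfig A args ns h]

theorem TBoxes.node (boxed : Bool) {i : ℕ} (A : Ty i) {args : Fin i → BConfig}
    {ns : Fin i → ℕ} (h : ∀ k, CBoxes (args k) (ns k)) :
    TBoxes (node boxed A args) (∑ k, ns k + boxed.toNat) := by
  rcases i with - | i <;> cases boxed
  exacts [.type0 A, .btype0 A, .fig A args ns h, .bfig A args ns h]

theorem FoldT.node (boxed : Bool) {i : ℕ} (A : Ty i) {args args' : Fin i → BConfig}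
    {reps : Fin i → List BConfig} (h : ∀ k, FoldC (args k) (reps k) (args' k)) :
    FoldT (node boxed A args) (List.ofFn reps).flatten [node boxed A args'] := by
  rcases i with - | i <;> cases boxed
  exacts [.type0 A, .btype0 A, .fig A args args' reps h, .bfig A args args' reps h]

theorem exists_plugT_node (boxed : Bool) {i : ℕ} (A : Ty i) (args : Fin i → BConfig) (k : Fin i)
    (c : CHole) : ∃ t : THole, ∀ Γ Δ : BConfig, PlugC c Γ Δ →
      PlugT t Γ (node boxed A (Function.update args k Δ)) := by
  rcases i with - | i
  · exact k.elim0
  · cases boxed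
    exacts [⟨.fig A args k c, fun Γ Δ => .fig A args k c Γ Δ⟩,
      ⟨.bfig A args k c, fun Γ Δ => .bfig A args k c Γ Δ⟩]

theorem TOcc.of_node {φ : ∀ j : ℕ, Ty j → Prop} {boxed : Bool} {i : ℕ} {A : Ty i}
    {args : Fin i → BConfig} (h : TOcc φ (node boxed A args)) :
    φ i A ∨ ∃ k, COcc φ (args k) := by
  rcases i with - | i <;> cases boxed <;> cases h <;>
    first | exact .inl ‹_› | exact .inr ⟨_, ‹_›⟩

/-! ### Weights -/

/-- A natural number for each occurrence of a type, depending on whether it is boxed. -/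
abbrev Weight : Type := Bool → ∀ i : ℕ, Ty i → ℕ

mutual
  /-- The weight of an element of a configuration; see `weight`. -/
  def treeWeight (a : ℕ) (w : Weight) : BTree → ℕ
    | .sep => a
    | .type0 A => w false 0 A
    | .btype0 A => w true 0 A
    | .fig A args => w false _ A + ∑ k, weight a w (args k)
    | .bfig A args => w true _ A + ∑ k, weight a w (args k)
  /-- The sum of the weights of the type occurrences of a configuration, where moreover every
  separator weighs `a`. -/
  def weight (a : ℕ) (w : Weight) : List BTree → ℕ
    | [] => 0
    | t :: Γ => treeWeight a w t + weight a w Γ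
end

/-- The weight counting boxed occurrences. -/
def boxWeight : Weight := fun boxed _ _ => boxed.toNat

/-- The weight counting occurrences of complex types that are asynchronous in the antecedent. -/
def complexWeight : Weight := fun _ _ A => (posb A && !isAtom A).toNat

/-- The number of separators of a configuration. -/
def sort (Γ : BConfig) : ℕ := weight 1 0 Γ

section weight

variable (a : ℕ) (w : Weight)

@[simp]
theorem weight_nil : weight a w [] = 0 := by
  rw [weight]

@[simp]
theorem weight_sep_cons (Γ : BConfig) : weight a w (.sep :: Γ) = a + weight a w Γ := by
  rw [weight, treeWeight]

@[simp]
theorem weight_node_cons (boxed : Bool) {i : ℕ} (A : Ty i) (args : Fin i → BConfig)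
    (Γ : BConfig) : weight a w (node boxed A args :: Γ) =
      w boxed i A + ∑ k, weight a w (args k) + weight a w Γ := by
  rcases i with - | i <;> cases boxed <;> simp [weight, node, treeWeight]

@[simp]
theorem weight_append (Γ Δ : BConfig) : weight a w (Γ ++ Δ) = weight a w Γ + weight a w Δ := by
  induction Γ with
  | nil => rw [List.nil_append, weight_nil, zero_add]
  | cons t Γ ih => rw [List.cons_append, weight, weight, ih, add_assoc]

theorem weight_vec {i : ℕ} (A : Ty i) : weight a w (vec A) = w false i A + i * a := by
  simp [vec_eq_node]

theorem weight_bvec {i : ℕ} (A : Ty i) : weight a w (bvec A) = w true i A + i * a := by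
  simp [bvec_eq_node]

end weight

@[simp]
theorem sort_nil : sort [] = 0 :=
  weight_nil 1 0

@[simp]
theorem sort_sep_cons (Γ : BConfig) : sort (.sep :: Γ) = 1 + sort Γ :=
  weight_sep_cons 1 0 Γ

@[simp]
theorem sort_node_cons (boxed : Bool) {i : ℕ} (A : Ty i) (args : Fin i → BConfig)
    (Γ : BConfig) : sort (node boxed A args :: Γ) = ∑ k, sort (args k) + sort Γ := by
  simp [sort]

@[simp]
theorem sort_append (Γ Δ : BConfig) : sort (Γ ++ Δ) = sort Γ + sort Δ :=
  weight_append 1 0 Γ Δ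

@[simp]
theorem sort_vec {i : ℕ} (A : Ty i) : sort (vec A) = i := by
  simp [sort, weight_vec]

@[simp]
theorem sort_bvec {i : ℕ} (A : Ty i) : sort (bvec A) = i := by
  simp [sort, weight_bvec]

@[simp]
theorem sort_fvec {i : ℕ} (A : Ty i) : sort (fvec A) = i := by
  rw [fvec, apply_ite sort, sort_vec, sort_bvec, ite_self]

theorem configSort_sort (Γ : BConfig) : ConfigSort Γ (sort Γ) := by
  induction Γ using config_induction with
  | nil => rw [sort_nil]; exact .nil
  | sep Γ ih => rw [sort_sep_cons]; exact .cons .sep ih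
  | node boxed A args Γ ihargs ih =>
    rw [sort_node_cons]
    exact .cons (.node boxed A ihargs) ih

theorem cBoxes_weight (Γ : BConfig) : CBoxes Γ (weight 0 boxWeight Γ) := by
  induction Γ using config_induction with
  | nil => rw [weight_nil]; exact .nil
  | sep Γ ih => rw [weight_sep_cons]; exact .cons .sep ih
  | node boxed A args Γ ihargs ih =>
    rw [weight_node_cons, add_comm (boxWeight _ _ _)]
    exact .cons (.node boxed A ihargs) ih

theorem not_cOcc_complex {Γ : BConfig} (h : weight 0 complexWeight Γ = 0) :
    ¬ COcc (fun _ A => posb A = true ∧ isAtom A = false) Γ := by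
  induction Γ using config_induction with
  | nil => nofun
  | sep Γ ih =>
    rintro (⟨⟨⟩⟩ | hocc)
    exact ih (by simpa using h) hocc
  | node boxed A args Γ ihargs ih =>
    rw [weight_node_cons, add_eq_zero, add_eq_zero, Finset.sum_eq_zero_iff] at h
    obtain ⟨⟨hA, hargs⟩, hΓ⟩ := h
    rintro (hocc | hocc)
    · obtain hA' | ⟨k, hk⟩ := hocc.of_node
      · simp [complexWeight, hA'] at hA
      · exact ihargs k (hargs k (Finset.mem_univ k)) hk
    · exact ih hΓ hocc

/-! ### Consecutive blocks of indices -/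

/-- When the indices `0, …, ∑ k, s k - 1` are split into consecutive blocks of lengths `s k`, the
first index of the `k`-th block. -/
def blockOffset {m : ℕ} (s : Fin m → ℕ) (k : Fin m) : ℕ :=
  ∑ l : Fin k, s (Fin.castLE k.2.le l)

section blockOffset

variable {m : ℕ} (s : Fin m → ℕ)

theorem sum_range_sum {M : Type*} [AddCommMonoid M] (g : ℕ → M) :
    ∑ n ∈ Finset.range (∑ k, s k), g n =
      ∑ k, ∑ n ∈ Finset.range (s k), g (blockOffset s k + n) := by
  simp_rw [Finset.sum_range, ← Equiv.sum_comp finSigmaFinEquiv, Fintype.sum_sigma,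
    finSigmaFinEquiv_apply, blockOffset]

theorem map_range_sum {α : Type*} : ∀ {m : ℕ} (s : Fin m → ℕ) (g : ℕ → α),
    (List.range (∑ k, s k)).map g =
      (List.ofFn fun k => (List.range (s k)).map fun n => g (blockOffset s k + n)).flatten
  | 0, _, _ => by simp
  | m + 1, s, g => by
    rw [Fin.sum_univ_castSucc, List.range_add, List.map_append, map_range_sum, List.ofFn_succ',
      List.concat_eq_append, List.flatten_append, List.map_map]
    simp only [List.flatten_cons, List.flatten_nil, List.append_nil]
    rfl

theorem exists_eq_blockOffset_add {n : ℕ} (hn : n < ∑ k, s k) :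
    ∃ k, ∃ p < s k, n = blockOffset s k + p := by
  obtain ⟨⟨k, p⟩, hkp⟩ := finSigmaFinEquiv.surjective ⟨n, hn⟩
  exact ⟨k, p, p.2, by rw [← Fin.val_mk hn, ← hkp, finSigmaFinEquiv_apply, blockOffset]⟩

theorem blockOffset_add_lt {k : Fin m} {p : ℕ} (hp : p < s k) :
    blockOffset s k + p < ∑ l, s l := by
  have := (finSigmaFinEquiv ⟨k, ⟨p, hp⟩⟩ : Fin (∑ l, s l)).2
  rwa [finSigmaFinEquiv_apply] at this

theorem blockOffset_add_ne {k l : Fin m} (hkl : k ≠ l) {p q : ℕ} (hp : p < s k) (hq : q < s l) :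
    blockOffset s k + p ≠ blockOffset s l + q := by
  intro h
  have : (finSigmaFinEquiv ⟨k, ⟨p, hp⟩⟩ : Fin (∑ l, s l)) = finSigmaFinEquiv ⟨l, ⟨q, hq⟩⟩ :=
    Fin.ext (by rwa [finSigmaFinEquiv_apply, finSigmaFinEquiv_apply])
  exact hkl (congrArg Sigma.fst (finSigmaFinEquiv.injective this))

end blockOffset

/-! ### Folds -/

mutual
  /-- The fold of an element of a configuration; see `fold`. -/
  def treeFold : BTree → (ℕ → BConfig) → BConfig
    | .sep, ρ => ρ 0
    | .type0 A, _ => [.type0 A]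
    | .btype0 A, _ => [.btype0 A]
    | .fig A args, ρ => [.fig A fun k =>
        fold (args k) fun n => ρ (blockOffset (fun l => sort (args l)) k + n)]
    | .bfig A args, ρ => [.bfig A fun k =>
        fold (args k) fun n => ρ (blockOffset (fun l => sort (args l)) k + n)]
  /-- The fold `Γ ⊗ ⟨ρ 0 : ρ 1 : …⟩`: the `n`-th separator of `Γ`, counted from `0`, is replaced
  by `ρ n`. -/
  def fold : List BTree → (ℕ → BConfig) → BConfig
    | [], _ => []
    | t :: Γ, ρ => treeFold t ρ ++ fold Γ fun n => ρ (treeWeight 1 0 t + n)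
end

@[simp]
theorem fold_nil (ρ : ℕ → BConfig) : fold [] ρ = [] := by
  rw [fold]

@[simp]
theorem fold_sep_cons (Γ : BConfig) (ρ : ℕ → BConfig) :
    fold (.sep :: Γ) ρ = ρ 0 ++ fold Γ fun n => ρ (1 + n) := by
  rw [fold, treeFold, treeWeight]

@[simp]
theorem fold_node_cons (boxed : Bool) {i : ℕ} (A : Ty i) (args : Fin i → BConfig) (Γ : BConfig)
    (ρ : ℕ → BConfig) :
    fold (node boxed A args :: Γ) ρ =
      node boxed A (fun k => fold (args k) fun n =>
        ρ (blockOffset (fun l => sort (args l)) k + n)) ::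
      fold Γ fun n => ρ (∑ k, sort (args k) + n) := by
  rcases i with - | i <;> cases boxed <;> simp [fold, node, treeFold, treeWeight, sort]

theorem fold_append (Γ Δ : BConfig) (ρ : ℕ → BConfig) :
    fold (Γ ++ Δ) ρ = fold Γ ρ ++ fold Δ fun n => ρ (sort Γ + n) := by
  induction Γ generalizing ρ with
  | nil => simp
  | cons t Γ ih =>
    rw [List.cons_append, fold, fold, ih, List.append_assoc, sort, sort, weight]
    simp only [add_assoc]

theorem fold_sep (Γ : BConfig) : fold Γ (fun _ => [.sep]) = Γ := by
  induction Γ using config_induction with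
  | nil => rw [fold_nil]
  | sep Γ ih => rw [fold_sep_cons, ih, List.singleton_append]
  | node boxed A args Γ ihargs ih => simp only [fold_node_cons, ihargs, ih]

theorem foldC_fold (Γ : BConfig) (ρ : ℕ → BConfig) :
    FoldC Γ ((List.range (sort Γ)).map ρ) (fold Γ ρ) := by
  induction Γ using config_induction generalizing ρ with
  | nil => simpa using FoldC.nil
  | sep Γ ih =>
    rw [sort_sep_cons, List.range_add, List.map_append, List.map_map, fold_sep_cons]
    exact .cons (.sep _) (ih _)
  | node boxed A args Γ ihargs ih =>
    rw [sort_node_cons, List.range_add, List.map_append, List.map_map, map_range_sum,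
      fold_node_cons]
    exact .cons (.node boxed A fun k => ihargs k _) (ih _)

theorem fold_congr {Γ : BConfig} {ρ σ : ℕ → BConfig} (h : ∀ n < sort Γ, ρ n = σ n) :
    fold Γ ρ = fold Γ σ := by
  induction Γ using config_induction generalizing ρ σ with
  | nil => rw [fold_nil, fold_nil]
  | sep Γ ih =>
    rw [sort_sep_cons] at h
    rw [fold_sep_cons, fold_sep_cons, h 0 (by omega), ih fun n hn => h _ (by omega)]
  | node boxed A args Γ ihargs ih =>
    rw [sort_node_cons] at h
    have hargs (k) := ihargs k fun n hn =>
      h _ (Nat.lt_add_right _ (blockOffset_add_lt (fun l => sort (args l)) hn))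
    simp only [fold_node_cons, hargs]
    rw [ih fun n hn => h _ (by omega)]

theorem weight_fold (a : ℕ) (w : Weight) (Γ : BConfig) (ρ : ℕ → BConfig) :
    weight a w (fold Γ ρ) = weight 0 w Γ + ∑ n ∈ Finset.range (sort Γ), weight a w (ρ n) := by
  induction Γ using config_induction generalizing ρ with
  | nil => simp
  | sep Γ ih =>
    rw [fold_sep_cons, weight_append, ih, weight_sep_cons, sort_sep_cons, Finset.sum_range_add,
      Finset.sum_range_one]
    ring
  | node boxed A args Γ ihargs ih =>
    simp only [fold_node_cons, weight_node_cons, ihargs, ih, sort_node_cons, Finset.sum_range_add,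
      sum_range_sum, Finset.sum_add_distrib]
    ring

theorem weight_eq_add_sort_mul (a : ℕ) (w : Weight) (Γ : BConfig) :
    weight a w Γ = weight 0 w Γ + sort Γ * a := by
  simpa [fold_sep] using weight_fold a w Γ fun _ => [.sep]

theorem sort_fold (Γ : BConfig) (ρ : ℕ → BConfig) :
    sort (fold Γ ρ) = ∑ n ∈ Finset.range (sort Γ), sort (ρ n) := by
  have h0 : weight 0 0 Γ = 0 := by
    simpa [sort] using weight_eq_add_sort_mul 1 0 Γ
  rw [sort, weight_fold, h0, zero_add]
  rfl

theorem fold_fold (Γ : BConfig) (ρ σ : ℕ → BConfig) :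
    fold (fold Γ ρ) σ =
      fold Γ fun n => fold (ρ n) fun p => σ (∑ l ∈ Finset.range n, sort (ρ l) + p) := by
  induction Γ using config_induction generalizing ρ σ with
  | nil => rw [fold_nil, fold_nil, fold_nil]
  | sep Γ ih =>
    simp only [fold_sep_cons, fold_append, ih, Finset.sum_range_zero, zero_add,
      Finset.sum_range_add, Finset.sum_range_one, add_assoc]
  | node boxed A args Γ ihargs ih =>
    simp only [fold_node_cons, ihargs, ih, sort_fold, sum_range_sum, Finset.sum_range_add,
      blockOffset, add_assoc]
    rfl

/-! ### One-hole contexts -/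

/-- The operations `Δ₀(—)` plugging their argument into a one-hole context `Δ₀`. -/
inductive IsOneHole : (BConfig → BConfig) → Prop
  | top (pre post : BConfig) : IsOneHole fun Γ => pre ++ Γ ++ post
  | deep (pre post : BConfig) (boxed : Bool) {i : ℕ} (A : Ty i) (args : Fin i → BConfig)
      (k : Fin i) {f : BConfig → BConfig} : IsOneHole f →
      IsOneHole fun Γ => pre ++ node boxed A (Function.update args k (f Γ)) :: post

namespace IsOneHole

variable {f g : BConfig → BConfig}

theorem id : IsOneHole fun Γ => Γ := by
  simpa using top [] []

theorem append (hf : IsOneHole f) (pre post : BConfig) :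
    IsOneHole fun Γ => pre ++ f Γ ++ post := by
  cases hf with
  | top pre' post' => simpa using top (pre ++ pre') (post' ++ post)
  | deep pre' post' boxed A args k hf =>
    simpa using deep (pre ++ pre') (post' ++ post) boxed A args k hf

theorem comp (hg : IsOneHole g) (hf : IsOneHole f) : IsOneHole fun Γ => g (f Γ) := by
  induction hg with
  | top pre post => exact hf.append pre post
  | deep pre post boxed A args k _ ih => exact deep pre post boxed A args k ih

theorem exists_plugC (hf : IsOneHole f) : ∃ c : CHole, ∀ Γ, PlugC c Γ (f Γ) := by
  induction hf with
  | top pre post => exact ⟨.top pre post, fun Γ => .top pre post Γ⟩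
  | deep pre post boxed A args k _ ih =>
    obtain ⟨c, hc⟩ := ih
    obtain ⟨t, ht⟩ := exists_plugT_node boxed A args k c
    exact ⟨.deep pre t post, fun Γ => .deep pre post Γ t _ (ht Γ _ (hc Γ))⟩

end IsOneHole

theorem fold_update_add_of_ne {Γ : BConfig} {a m : ℕ} (h : ∀ n < sort Γ, a + n ≠ m)
    (ρ : ℕ → BConfig) (Δ : BConfig) :
    (fold Γ fun n => Function.update ρ m Δ (a + n)) = fold Γ fun n => ρ (a + n) :=
  fold_congr fun n hn => Function.update_of_ne (h n hn) Δ ρ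

theorem fold_update_add (Γ : BConfig) (a m : ℕ) (ρ : ℕ → BConfig) (Δ : BConfig) :
    (fold Γ fun n => Function.update ρ (a + m) Δ (a + n)) =
      fold Γ (Function.update (fun n => ρ (a + n)) m Δ) :=
  congrArg (fold Γ) (Function.update_comp_eq_of_injective ρ (add_right_injective a) m Δ)

theorem isOneHole_fold_update {Γ : BConfig} {m : ℕ} (hm : m < sort Γ) (ρ : ℕ → BConfig) :
    IsOneHole fun Δ => fold Γ (Function.update ρ m Δ) := by
  induction Γ using config_induction generalizing ρ m with
  | nil => simp at hm
  | sep Γ ih =>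
    simp only [fold_sep_cons]
    obtain rfl | ⟨m, rfl⟩ := (Nat.eq_zero_or_pos m).imp_right Nat.exists_eq_add_of_le
    · have hΓ (n) (_ : n < sort Γ) : 1 + n ≠ 0 := by omega
      simp only [Function.update_self, fold_update_add_of_ne hΓ]
      exact .top [] _
    · rw [sort_sep_cons] at hm
      simp only [Function.update_of_ne (by omega : 0 ≠ 1 + m), fold_update_add]
      simpa using (ih (by omega) fun n => ρ (1 + n)).append (ρ 0) []
  | node boxed A args Γ ihargs ih =>
    rw [sort_node_cons] at hm
    simp only [fold_node_cons]
    obtain hm' | ⟨m, rfl⟩ := (lt_or_ge m (∑ k, sort (args k))).imp_right Nat.exists_eq_add_of_le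
    · set s := fun l => sort (args l)
      obtain ⟨k, p, hp, rfl⟩ := exists_eq_blockOffset_add s hm'
      have hargs (Δ) : (fun l => fold (args l) fun n =>
          Function.update ρ (blockOffset s k + p) Δ (blockOffset s l + n)) =
          Function.update (fun l => fold (args l) fun n => ρ (blockOffset s l + n)) k
            (fold (args k) (Function.update (fun n => ρ (blockOffset s k + n)) p Δ)) := by
        rw [Function.eq_update_iff]
        exact ⟨fold_update_add .., fun l hl =>
          fold_update_add_of_ne (fun n hn => blockOffset_add_ne s hl hn hp) ρ Δ⟩
      have hΓ (n) (_ : n < sort Γ) : Finset.univ.sum s + n ≠ blockOffset s k + p := by omega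
      simp only [hargs, fold_update_add_of_ne hΓ]
      exact .deep [] _ boxed A _ k (ihargs k hp _)
    · have hargs (k n) (hn : n < sort (args k)) :
          blockOffset (fun l => sort (args l)) k + n ≠ ∑ k, sort (args k) + m := by
        have := blockOffset_add_lt (fun l => sort (args l)) hn
        omega
      simp only [fold_update_add, fun k => fold_update_add_of_ne (hargs k)]
      simpa using (ih (by omega) fun n => ρ (∑ k, sort (args k) + n)).append [node boxed A _] []

/-! ### Wrapping -/

/-- The wrap `Δ |ₖ Γ`. Its separators are counted from `1`, those of `fold` from `0`. -/
def wrap (k : ℕ) (Δ Γ : BConfig) : BConfig :=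
  fold Δ (Function.update (fun _ => [.sep]) (k - 1) Γ)

theorem wrap_spec (k : ℕ) (Δ Γ : BConfig) : Wrap Δ k Γ (wrap k Δ Γ) := by
  refine ⟨sort Δ, configSort_sort Δ, ?_⟩
  rw [wrap]
  convert foldC_fold Δ (Function.update (fun _ => [.sep]) (k - 1) Γ)
  refine List.ext_getElem (by simp) fun n _ _ => ?_
  simp [List.getElem_set, Function.update_apply, eq_comm]

theorem weight_wrap (a : ℕ) (w : Weight) {k : ℕ} {Δ : BConfig} (hk : k - 1 < sort Δ)
    (Γ : BConfig) : weight a w (wrap k Δ Γ) + a = weight a w Δ + weight a w Γ := by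
  have hupdate (n) : weight a w (Function.update (fun _ => [BTree.sep]) (k - 1) Γ n) =
      Function.update (fun _ => a) (k - 1) (weight a w Γ) n := by
    simp [Function.apply_update (fun _ => weight a w)]
  rw [wrap, weight_fold, weight_eq_add_sort_mul a w Δ]
  simp only [hupdate]
  rw [Finset.sum_update_of_mem (Finset.mem_range.2 hk), Finset.sum_const,
    Finset.sdiff_singleton_eq_erase, Finset.card_erase_of_mem (Finset.mem_range.2 hk),
    Finset.card_range, smul_eq_mul]
  obtain ⟨s, hs⟩ := Nat.exists_eq_add_of_lt hk
  rw [hs, Nat.add_sub_cancel]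
  ring

theorem fold_wrap (k : ℕ) (Δ Γ : BConfig) (ρ : ℕ → BConfig) :
    fold (wrap k Δ Γ) ρ =
      fold Δ (Function.update
        (fun n => ρ (∑ l ∈ Finset.range n, Function.update (fun _ => 1) (k - 1) (sort Γ) l))
        (k - 1) (fold Γ fun n => ρ (k - 1 + n))) := by
  have hsort (l) : sort (Function.update (fun _ => [BTree.sep]) (k - 1) Γ l) =
      Function.update (fun _ => 1) (k - 1) (sort Γ) l := by
    simp [Function.apply_update (fun _ => sort)]
  rw [wrap, fold_fold]
  congr 1
  simp only [hsort]
  refine Function.eq_update_iff.2 ⟨?_, fun n hn => ?_⟩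
  · rw [Finset.sum_update_of_notMem Finset.notMem_range_self]
    simp
  · simp [hn]

/-! ### Contexts -/

/-- `F` agrees with `Δ⟨—⟩`, for some context `Δ⟨—⟩` of the displacement calculus, on the
configurations of sort `i`. -/
def IsContext (i : ℕ) (F : BConfig → BConfig) : Prop :=
  ∃ f, IsOneHole f ∧ ∃ ρ, ∀ X, sort X = i → F X = f (fold X ρ)

/-- `F` contributes nothing to the weight of configurations of sort `i`. -/
def Preserves (w : Weight) (i : ℕ) (F : BConfig → BConfig) : Prop :=
  ∀ X, sort X = i → weight 0 w (F X) = weight 0 w X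

theorem isContext_id (i : ℕ) : IsContext i id :=
  ⟨id, .id, fun _ => [.sep], fun X _ => (fold_sep X).symm⟩

theorem preserves_id (w : Weight) (i : ℕ) : Preserves w i id :=
  fun _ _ => rfl

theorem IsContext.exists_sub {i : ℕ} {F : BConfig → BConfig} (hF : IsContext i F) :
    ∃ Z : Zone, ∀ X, sort X = i → Sub Z X (F X) := by
  obtain ⟨f, hf, ρ, hfρ⟩ := hF
  obtain ⟨c, hc⟩ := hf.exists_plugC
  refine ⟨⟨c, (List.range i).map ρ⟩, ?_⟩
  rintro X rfl
  exact ⟨fold X ρ, foldC_fold X ρ, hfρ X rfl ▸ hc _⟩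

/-- An operation putting together a configuration of sort `i` and one of sort `j` to one of sort
`l`, in such a way that either argument stands in a context provided by the other. Concatenation
and wrapping are the examples. -/
structure IsJoin (i j l : ℕ) (op : BConfig → BConfig → BConfig) : Prop where
  sort_eq : ∀ {X Y}, sort X = i → sort Y = j → sort (op X Y) = l
  weight_eq : ∀ (w) {X Y}, sort X = i → sort Y = j →
    weight 0 w (op X Y) = weight 0 w X + weight 0 w Y
  context_left : ∀ {F Y}, IsContext l F → sort Y = j → IsContext i fun X => F (op X Y)
  context_right : ∀ {F X}, IsContext l F → sort X = i → IsContext j fun Y => F (op X Y)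

theorem isJoin_append (i j : ℕ) : IsJoin i j (i + j) (· ++ ·) where
  sort_eq hX hY := by rw [sort_append, hX, hY]
  weight_eq w X Y _ _ := weight_append 0 w X Y
  context_left := by
    rintro _ Y ⟨f, hf, ρ, hfρ⟩ rfl
    refine ⟨_, hf.comp (.top [] (fold Y fun n => ρ (i + n))), ρ, ?_⟩
    rintro X rfl
    exact (hfρ _ (sort_append X Y)).trans (congrArg f (fold_append X Y ρ))
  context_right := by
    rintro _ X ⟨f, hf, ρ, hfρ⟩ rfl
    refine ⟨_, hf.comp (.top (fold X ρ) []), fun n => ρ (sort X + n), ?_⟩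
    rintro Y rfl
    rw [List.append_nil, ← fold_append]
    exact hfρ _ (sort_append X Y)

theorem isJoin_wrap (j : ℕ) {i k : ℕ} (hk : 1 ≤ k ∧ k ≤ i + 1) :
    IsJoin (i + 1) j (i + j) (wrap k) := by
  have sort_eq {X Y} (hX : sort X = i + 1) (hY : sort Y = j) : sort (wrap k X Y) = i + j := by
    have := weight_wrap 1 0 (by omega : k - 1 < sort X) Y
    simp only [sort] at *
    omega
  refine ⟨sort_eq, fun w X Y hX _ => weight_wrap 0 w (by omega) Y, ?_, ?_⟩
  · rintro _ Y ⟨f, hf, ρ, hfρ⟩ rfl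
    exact ⟨f, hf, _, fun X hX => (hfρ _ (sort_eq hX rfl)).trans (congrArg f (fold_wrap k X Y ρ))⟩
  · rintro _ X ⟨f, hf, ρ, hfρ⟩ hX
    refine ⟨_, hf.comp (isOneHole_fold_update (by omega : k - 1 < sort X) fun n =>
      ρ (∑ l ∈ Finset.range n, Function.update (fun _ => 1) (k - 1) j l)),
      fun n => ρ (k - 1 + n), ?_⟩
    rintro Y rfl
    exact (hfρ _ (sort_eq hX rfl)).trans (congrArg f (fold_wrap k X Y ρ))

namespace IsJoin

variable {i j l : ℕ} {op : BConfig → BConfig → BConfig}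

theorem flip (hop : IsJoin i j l op) : IsJoin j i l fun X Y => op Y X where
  sort_eq hX hY := hop.sort_eq hY hX
  weight_eq w _ _ hX hY := (hop.weight_eq w hY hX).trans (add_comm _ _)
  context_left := hop.context_right
  context_right := hop.context_left

theorem preserves_left (hop : IsJoin i j l op) {w : Weight} {F : BConfig → BConfig} {Y : BConfig}
    (hF : Preserves w l F) (hY : sort Y = j) (hw : weight 0 w Y = 0) :
    Preserves w i fun X => F (op X Y) :=
  fun X hX => by rw [hF _ (hop.sort_eq hX hY), hop.weight_eq w hX hY, hw, add_zero]

theorem preserves_right (hop : IsJoin i j l op) {w : Weight} {F : BConfig → BConfig} {X : BConfig}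
    (hF : Preserves w l F) (hX : sort X = i) (hw : weight 0 w X = 0) :
    Preserves w j fun Y => F (op X Y) :=
  hop.flip.preserves_left hF hX hw

end IsJoin

/-! ### Asynchronous decompositions -/

/-- The configurations resulting from `vec A` by decomposing asynchronous types until none is
left. -/
def leftReducts : {i : ℕ} → Ty i → Set BConfig
  | _, .prod A B => Set.image2 (· ++ ·) (leftReducts A) (leftReducts B)
  | _, .unitI => {[]}
  | _, .wprod k _ A B => Set.image2 (wrap k) (leftReducts A) (leftReducts B)
  | _, .unitJ => {[.sep]}
  | _, .oplus A B => leftReducts A ∪ leftReducts B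
  | _, A => {vec A}

/-- A sequent `Δ⟨—⟩ ⊢ D` with an unspecified part of the antecedent, of which `context` is the
operation `Δ⟨—⟩`, `sort` the sort of `D`, and `succ` the succedent `D`. -/
structure OpenSequent : Type where
  context : BConfig → BConfig
  sort : ℕ
  succ : Ty sort

/-- Attach `Y` by `op` to the configuration filled into `S`. -/
def OpenSequent.attach (op : BConfig → BConfig → BConfig) (Y : BConfig) (S : OpenSequent) :
    OpenSequent :=
  { S with context := fun X => S.context (op X Y) }

/-- The sequents resulting from `X ⊢ A` by decomposing asynchronous types until none is left
outside of `X`, as functions of `X`. -/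
def rightReducts : {i : ℕ} → Ty i → Set OpenSequent
  | _, .over C B => Set.image2 (.attach (· ++ ·)) (leftReducts B) (rightReducts C)
  | _, .under A C => Set.image2 (.attach fun X Y => Y ++ X) (leftReducts A) (rightReducts C)
  | _, .circ k _ C B => Set.image2 (.attach (wrap k)) (leftReducts B) (rightReducts C)
  | _, .infx k _ A C => Set.image2 (.attach fun X Y => wrap k Y X) (leftReducts A) (rightReducts C)
  | _, .amp A B => rightReducts A ∪ rightReducts B
  | i, A => {⟨id, i, A⟩}

theorem leftReducts_of_posb_eq_false {i : ℕ} {A : Ty i} (hA : posb A = false) :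
    leftReducts A = {vec A} := by
  cases A <;> first | rfl | cases hA

theorem rightReducts_of_posb_eq_true {i : ℕ} {A : Ty i} (hA : posb A = true) :
    rightReducts A = {⟨id, i, A⟩} := by
  cases A <;> first | rfl | cases hA

/-- `X` has sort `i` and contains neither boxed types nor complex asynchronous ones. -/
structure IsSettled (i : ℕ) (X : BConfig) : Prop where
  sort_eq : sort X = i
  boxWeight_eq : weight 0 boxWeight X = 0
  complexWeight_eq : weight 0 complexWeight X = 0

/-- `S` is a sequent with an antecedent context for configurations of sort `i`, and contains
neither boxed types nor complex asynchronous ones besides those of the configuration filled in. -/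
structure OpenSequent.IsSettled (i : ℕ) (S : OpenSequent) : Prop where
  isContext : IsContext i S.context
  preserves_boxWeight : Preserves boxWeight i S.context
  preserves_complexWeight : Preserves complexWeight i S.context
  succ_settled : ¬ (posb S.succ = false ∧ isAtom S.succ = false)

theorem weight_boxWeight_vec {i : ℕ} (A : Ty i) : weight 0 boxWeight (vec A) = 0 :=
  weight_vec 0 boxWeight A

theorem isSettled_vec {i : ℕ} {A : Ty i} (hA : (posb A && !isAtom A) = false) :
    IsSettled i (vec A) where
  sort_eq := sort_vec A
  boxWeight_eq := weight_boxWeight_vec A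
  complexWeight_eq := by rw [weight_vec, complexWeight, hA]; rfl

theorem openSequent_isSettled_id {i : ℕ} {A : Ty i} (hA : ¬ (posb A = false ∧ isAtom A = false)) :
    OpenSequent.IsSettled i ⟨id, i, A⟩ where
  isContext := isContext_id i
  preserves_boxWeight := preserves_id _ i
  preserves_complexWeight := preserves_id _ i
  succ_settled := hA

namespace IsJoin

variable {i j l : ℕ} {op : BConfig → BConfig → BConfig}

theorem isSettled (hop : IsJoin i j l op) {X Y : BConfig} (hX : IsSettled i X)
    (hY : IsSettled j Y) : IsSettled l (op X Y) where
  sort_eq := hop.sort_eq hX.sort_eq hY.sort_eq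
  boxWeight_eq := by
    rw [hop.weight_eq _ hX.sort_eq hY.sort_eq, hX.boxWeight_eq, hY.boxWeight_eq]
  complexWeight_eq := by
    rw [hop.weight_eq _ hX.sort_eq hY.sort_eq, hX.complexWeight_eq, hY.complexWeight_eq]

theorem isSettled_attach (hop : IsJoin i j l op) {Y : BConfig} (hY : IsSettled j Y)
    {S : OpenSequent} (hS : S.IsSettled l) : (S.attach op Y).IsSettled i where
  isContext := hop.context_left hS.isContext hY.sort_eq
  preserves_boxWeight := hop.preserves_left hS.preserves_boxWeight hY.sort_eq hY.boxWeight_eq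
  preserves_complexWeight :=
    hop.preserves_left hS.preserves_complexWeight hY.sort_eq hY.complexWeight_eq
  succ_settled := hS.succ_settled

theorem isSettled_of_mem_image2 (hop : IsJoin i j l op) {S T : Set BConfig}
    (hS : ∀ X ∈ S, IsSettled i X) (hT : ∀ Y ∈ T, IsSettled j Y) :
    ∀ X ∈ Set.image2 op S T, IsSettled l X := by
  rintro _ ⟨X, hX, Y, hY, rfl⟩
  exact hop.isSettled (hS X hX) (hT Y hY)

theorem isSettled_of_mem_image2_attach (hop : IsJoin i j l op) {S : Set BConfig}
    {T : Set OpenSequent} (hS : ∀ Y ∈ S, IsSettled j Y) (hT : ∀ G ∈ T, G.IsSettled l) :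
    ∀ G ∈ Set.image2 (OpenSequent.attach op) S T, G.IsSettled i := by
  rintro _ ⟨Y, hY, G, hG, rfl⟩
  exact hop.isSettled_attach (hS Y hY) (hT G hG)

end IsJoin

theorem isSettled_of_mem_leftReducts :
    ∀ {i : ℕ} (A : Ty i), ∀ X ∈ leftReducts A, IsSettled i X
  | _, .prod A B => (isJoin_append _ _).isSettled_of_mem_image2
      (isSettled_of_mem_leftReducts A) (isSettled_of_mem_leftReducts B)
  | _, .wprod _ hk A B => (isJoin_wrap _ hk).isSettled_of_mem_image2
      (isSettled_of_mem_leftReducts A) (isSettled_of_mem_leftReducts B)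
  | _, .unitI => fun _ hX => hX ▸ ⟨sort_nil, weight_nil _ _, weight_nil _ _⟩
  | _, .unitJ => fun _ hX => hX ▸ ⟨by simp, by simp, by simp⟩
  | _, .oplus A B => fun X hX =>
    hX.elim (isSettled_of_mem_leftReducts A X) (isSettled_of_mem_leftReducts B X)
  | _, .atom .. => fun _ hX => hX ▸ isSettled_vec (by simp [isAtom])
  | _, .over .. | _, .under .. | _, .circ .. | _, .infx .. | _, .amp .. =>
    fun _ hX => hX ▸ isSettled_vec rfl

theorem isSettled_of_mem_rightReducts :
    ∀ {i : ℕ} (A : Ty i), ∀ S ∈ rightReducts A, S.IsSettled i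
  | _, .over C B => (isJoin_append _ _).isSettled_of_mem_image2_attach
      (isSettled_of_mem_leftReducts B) (isSettled_of_mem_rightReducts C)
  | _, .under A C => (isJoin_append _ _).flip.isSettled_of_mem_image2_attach
      (isSettled_of_mem_leftReducts A) (isSettled_of_mem_rightReducts C)
  | _, .circ _ hk C B => (isJoin_wrap _ hk).isSettled_of_mem_image2_attach
      (isSettled_of_mem_leftReducts B) (isSettled_of_mem_rightReducts C)
  | _, .infx _ hk A C => (isJoin_wrap _ hk).flip.isSettled_of_mem_image2_attach
      (isSettled_of_mem_leftReducts A) (isSettled_of_mem_rightReducts C)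
  | _, .amp A B => fun S hS =>
    hS.elim (isSettled_of_mem_rightReducts A S) (isSettled_of_mem_rightReducts B S)
  | _, .atom .. => fun _ hS => hS ▸ openSequent_isSettled_id (by simp [isAtom])
  | _, .prod .. | _, .wprod .. | _, .unitI | _, .unitJ | _, .oplus .. =>
    fun _ hS => hS ▸ openSequent_isSettled_id (by simp [posb])

/-! ### Side conditions -/

section SideConditions

variable {strong : Bool} {Δ : BConfig} {i : ℕ} {A : Ty i}

theorem atMostOne_of_boxWeight_eq_zero (f : Bool) (h : weight 0 boxWeight Δ = 0) :
    AtMostOne Δ f := by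
  have hΔ : CBoxes Δ 0 := h ▸ cBoxes_weight Δ
  cases f
  exacts [.inl hΔ, hΔ]

theorem atMostOne_of_boxWeight_eq_one (h : weight 0 boxWeight Δ = 1) : AtMostOne Δ false :=
  .inr (h ▸ cBoxes_weight Δ)

theorem ok_of_boxWeight_eq_zero (h : weight 0 boxWeight Δ = 0) : Ok strong Δ false i A :=
  fun _ hfocus => hfocus.1.elim nofun fun hΔ => hΔ (h ▸ cBoxes_weight Δ)

theorem ok_of_complexWeight_eq_zero (f : Bool) (h : weight 0 complexWeight Δ = 0)
    (hA : ¬ (posb A = false ∧ isAtom A = false)) : Ok strong Δ f i A :=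
  fun _ hasync => hasync.2.elim (not_cOcc_complex h) hA

theorem Preserves.boxWeight_vec {F : BConfig → BConfig} (hF : Preserves boxWeight i F)
    (A : Ty i) : weight 0 boxWeight (F (vec A)) = 0 :=
  (hF _ (sort_vec A)).trans (weight_boxWeight_vec A)

theorem OpenSequent.IsSettled.atMostOne_bvec {S : OpenSequent} (hS : S.IsSettled i) (A : Ty i) :
    AtMostOne (S.context (bvec A)) false := by
  refine atMostOne_of_boxWeight_eq_one ?_
  rw [hS.preserves_boxWeight _ (sort_bvec A), weight_bvec]
  rfl

theorem OpenSequent.IsSettled.ok_bvec {S : OpenSequent} (hS : S.IsSettled i)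
    (hA : posb A = false) : Ok strong (S.context (bvec A)) false S.sort S.succ := by
  refine ok_of_complexWeight_eq_zero _ ?_ hS.succ_settled
  rw [hS.preserves_complexWeight _ (sort_bvec A), weight_bvec, complexWeight, hA]
  rfl

end SideConditions

/-! ### The asynchronous phases -/

/-- The antecedent part of an asynchronous phase: in every context for configurations of sort `i`
that has no focus, derivability with `Γ` filled in follows from derivability with each element of
`S` filled in. -/
def LeftReducesTo (cuts strong : Bool) (i : ℕ) (Γ : BConfig) (S : Set BConfig) : Prop :=
  ∀ ⦃F d⦄ ⦃D : Ty d⦄, IsContext i F → Preserves boxWeight i F →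
    (∀ X ∈ S, DW cuts strong (F X) false d D) → DW cuts strong (F Γ) false d D

section Asynchronous

variable {cuts strong : Bool}

theorem leftReducesTo_singleton (i : ℕ) (Γ : BConfig) : LeftReducesTo cuts strong i Γ {Γ} :=
  fun _ _ _ _ _ h => h Γ rfl

theorem IsJoin.leftReducesTo_image2 {i j l : ℕ} {op : BConfig → BConfig → BConfig}
    (hop : IsJoin i j l op) {Γ Δ : BConfig} {S T : Set BConfig}
    (hΓ : LeftReducesTo cuts strong i Γ S) (hS : ∀ X ∈ S, IsSettled i X)
    (hΔ : LeftReducesTo cuts strong j Δ T) (hΔsort : sort Δ = j)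
    (hΔbox : weight 0 boxWeight Δ = 0) :
    LeftReducesTo cuts strong l (op Γ Δ) (Set.image2 op S T) := by
  intro F d D hF hFbox h
  refine hΓ (hop.context_left hF hΔsort) (hop.preserves_left hFbox hΔsort hΔbox) fun X hX => ?_
  obtain ⟨hXsort, hXbox, -⟩ := hS X hX
  exact hΔ (hop.context_right hF hXsort) (hop.preserves_right hFbox hXsort hXbox) fun Y hY =>
    h _ ⟨X, hX, Y, hY, rfl⟩

theorem LeftReducesTo.prod {i j : ℕ} {A : Ty i} {B : Ty j} {S : Set BConfig}
    (h : LeftReducesTo cuts strong (i + j) (vec A ++ vec B) S) :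
    LeftReducesTo cuts strong (i + j) (vec (.prod A B)) S := by
  intro F d D hF hFbox hS
  obtain ⟨Z, hZ⟩ := hF.exists_sub
  have hbox := hFbox.boxWeight_vec (.prod A B)
  exact .prodL (hZ _ (by simp)) (h hF hFbox hS) (hZ _ (sort_vec _))
    (atMostOne_of_boxWeight_eq_zero _ hbox) (ok_of_boxWeight_eq_zero hbox)

theorem LeftReducesTo.wprod {i j k : ℕ} (hk : 1 ≤ k ∧ k ≤ i + 1) {A : Ty (i + 1)} {B : Ty j}
    {S : Set BConfig} (h : LeftReducesTo cuts strong (i + j) (wrap k (vec A) (vec B)) S) :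
    LeftReducesTo cuts strong (i + j) (vec (.wprod k hk A B)) S := by
  intro F d D hF hFbox hS
  obtain ⟨Z, hZ⟩ := hF.exists_sub
  have hbox := hFbox.boxWeight_vec (.wprod k hk A B)
  exact .wprodL k hk (wrap_spec _ _ _) (hZ _ ((isJoin_wrap j hk).sort_eq (sort_vec A) (sort_vec B)))
    (h hF hFbox hS) (hZ _ (sort_vec _)) (atMostOne_of_boxWeight_eq_zero _ hbox)
    (ok_of_boxWeight_eq_zero hbox)

theorem LeftReducesTo.oplus {i : ℕ} {A B : Ty i} {S T : Set BConfig}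
    (hA : LeftReducesTo cuts strong i (vec A) S) (hB : LeftReducesTo cuts strong i (vec B) T) :
    LeftReducesTo cuts strong i (vec (.oplus A B)) (S ∪ T) := by
  intro F d D hF hFbox h
  obtain ⟨Z, hZ⟩ := hF.exists_sub
  have hbox := hFbox.boxWeight_vec (.oplus A B)
  exact .oplusL (hZ _ (sort_vec A)) (hA hF hFbox fun X hX => h X (.inl hX))
    (hZ _ (sort_vec B)) (hB hF hFbox fun X hX => h X (.inr hX)) (hZ _ (sort_vec _))
    (atMostOne_of_boxWeight_eq_zero _ hbox) (ok_of_boxWeight_eq_zero hbox)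

theorem leftReducesTo_unitI : LeftReducesTo cuts strong 0 (vec .unitI) {[]} := by
  intro F d D hF hFbox h
  obtain ⟨Z, hZ⟩ := hF.exists_sub
  have hbox := hFbox.boxWeight_vec .unitI
  exact .unitIL (hZ _ sort_nil) (h _ rfl) (hZ _ (sort_vec _))
    (atMostOne_of_boxWeight_eq_zero _ hbox) (ok_of_boxWeight_eq_zero hbox)

theorem leftReducesTo_unitJ : LeftReducesTo cuts strong 1 (vec .unitJ) {[.sep]} := by
  intro F d D hF hFbox h
  obtain ⟨Z, hZ⟩ := hF.exists_sub
  have hbox := hFbox.boxWeight_vec .unitJ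
  exact .unitJL (hZ _ (by simp)) (h _ rfl) (hZ _ (sort_vec _))
    (atMostOne_of_boxWeight_eq_zero _ hbox) (ok_of_boxWeight_eq_zero hbox)

theorem leftReducesTo_leftReducts :
    ∀ {i : ℕ} (A : Ty i), LeftReducesTo cuts strong i (vec A) (leftReducts A)
  | _, .prod A B => .prod <| (isJoin_append _ _).leftReducesTo_image2
      (leftReducesTo_leftReducts A) (isSettled_of_mem_leftReducts A)
      (leftReducesTo_leftReducts B) (sort_vec B) (weight_boxWeight_vec B)
  | _, .wprod _ hk A B => .wprod hk <| (isJoin_wrap _ hk).leftReducesTo_image2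
      (leftReducesTo_leftReducts A) (isSettled_of_mem_leftReducts A)
      (leftReducesTo_leftReducts B) (sort_vec B) (weight_boxWeight_vec B)
  | _, .oplus A B => .oplus (leftReducesTo_leftReducts A) (leftReducesTo_leftReducts B)
  | _, .unitI => leftReducesTo_unitI
  | _, .unitJ => leftReducesTo_unitJ
  | _, .atom .. | _, .over .. | _, .under .. | _, .circ .. | _, .infx .. | _, .amp .. =>
    leftReducesTo_singleton _ _

/-- The succedent part of an asynchronous phase: for every `Γ` of sort `i` without focus,
derivability of `Γ ⊢ A` follows from derivability of each element of `S` with `Γ` filled in. -/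
def RightReducesTo (cuts strong : Bool) {i : ℕ} (A : Ty i) (S : Set OpenSequent) : Prop :=
  ∀ ⦃Γ⦄, sort Γ = i → weight 0 boxWeight Γ = 0 →
    (∀ G ∈ S, DW cuts strong (G.context Γ) false G.sort G.succ) → DW cuts strong Γ false i A

theorem IsJoin.derivable_of_image2_attach {i j l : ℕ} {op : BConfig → BConfig → BConfig}
    (hop : IsJoin i j l op) {B : Ty j} {C : Ty l} {S : Set OpenSequent}
    (hC : RightReducesTo cuts strong C S) {Γ : BConfig}
    (hsort : sort Γ = i) (hbox : weight 0 boxWeight Γ = 0)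
    (h : ∀ G ∈ Set.image2 (OpenSequent.attach op) (leftReducts B) S,
      DW cuts strong (G.context Γ) false G.sort G.succ) :
    DW cuts strong (op Γ (vec B)) false l C := by
  refine leftReducesTo_leftReducts B (hop.context_right (isContext_id l) hsort)
    (hop.preserves_right (preserves_id _ l) hsort hbox) fun Y hY => ?_
  obtain ⟨hYsort, hYbox, -⟩ := isSettled_of_mem_leftReducts B Y hY
  refine hC (hop.sort_eq hsort hYsort) ?_ fun G hG => h _ ⟨Y, hY, G, hG, rfl⟩
  exact (hop.weight_eq _ hsort hYsort).trans (by rw [hbox, hYbox])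

theorem rightReducesTo_rightReducts :
    ∀ {i : ℕ} (A : Ty i), RightReducesTo cuts strong A (rightReducts A)
  | _, .over C _ => fun _ hsort hbox h =>
    .overR ((isJoin_append _ _).derivable_of_image2_attach (rightReducesTo_rightReducts C)
      hsort hbox h) (atMostOne_of_boxWeight_eq_zero _ hbox) (ok_of_boxWeight_eq_zero hbox)
  | _, .under _ C => fun _ hsort hbox h =>
    .underR ((isJoin_append _ _).flip.derivable_of_image2_attach (rightReducesTo_rightReducts C)
      hsort hbox h) (atMostOne_of_boxWeight_eq_zero _ hbox) (ok_of_boxWeight_eq_zero hbox)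
  | _, .circ _ hk C _ => fun _ hsort hbox h =>
    .circR _ hk (wrap_spec _ _ _) ((isJoin_wrap _ hk).derivable_of_image2_attach
      (rightReducesTo_rightReducts C) hsort hbox h)
      (atMostOne_of_boxWeight_eq_zero _ hbox) (ok_of_boxWeight_eq_zero hbox)
  | _, .infx _ hk _ C => fun _ hsort hbox h =>
    .infxR _ hk (wrap_spec _ _ _) ((isJoin_wrap _ hk).flip.derivable_of_image2_attach
      (rightReducesTo_rightReducts C) hsort hbox h)
      (atMostOne_of_boxWeight_eq_zero _ hbox) (ok_of_boxWeight_eq_zero hbox)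
  | _, .amp A B => fun _ hsort hbox h =>
    .ampR (rightReducesTo_rightReducts A hsort hbox fun G hG => h G (.inl hG))
      (rightReducesTo_rightReducts B hsort hbox fun G hG => h G (.inr hG))
      (atMostOne_of_boxWeight_eq_zero _ hbox) (ok_of_boxWeight_eq_zero hbox)
  | _, .atom .. | _, .prod .. | _, .wprod .. | _, .unitI | _, .unitJ | _, .oplus .. =>
    fun _ _ _ h => h _ rfl

end Asynchronous

/-! ### Eta-expansion -/

/-- The induction hypothesis for eta-expansion: besides `vec A ⊢ A` it provides the sequents
`X ⊢ [A]` and `Δ⟨[vec A]⟩ ⊢ D` left over by the asynchronous phases (without the focus where `A` is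
asynchronous), in the form of premises of the synchronous rules. -/
structure EtaExpands (cuts strong : Bool) {i : ℕ} (A : Ty i) : Prop where
  eta : DW cuts strong (vec A) false i A
  right_focus : ∀ X ∈ leftReducts A, DW cuts strong X (posb A) i A
  left_focus : ∀ G ∈ rightReducts A, DW cuts strong (G.context (fvec A)) false G.sort G.succ

section EtaExpands

variable {cuts strong : Bool} {i j : ℕ}

theorem EtaExpands.of_posb_eq_true {A : Ty i} (hA : posb A = true)
    (h : ∀ X ∈ leftReducts A, DW cuts strong X true i A) : EtaExpands cuts strong A := by
  have eta : DW cuts strong (vec A) false i A := by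
    refine leftReducesTo_leftReducts A (isContext_id i) (preserves_id _ i) fun X hX => ?_
    obtain ⟨-, hbox, -⟩ := isSettled_of_mem_leftReducts A X hX
    exact .focR hA (h X hX) (atMostOne_of_boxWeight_eq_zero _ hbox) (ok_of_boxWeight_eq_zero hbox)
  refine ⟨eta, by rwa [hA], ?_⟩
  rintro _ hG
  rw [rightReducts_of_posb_eq_true hA] at hG
  obtain rfl := hG
  rwa [fvec, if_pos hA]

theorem EtaExpands.of_posb_eq_false {A : Ty i} (hA : posb A = false)
    (h : ∀ G ∈ rightReducts A, DW cuts strong (G.context (bvec A)) false G.sort G.succ) :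
    EtaExpands cuts strong A := by
  have eta : DW cuts strong (vec A) false i A := by
    refine rightReducesTo_rightReducts A (sort_vec A) (weight_boxWeight_vec A) fun G hG => ?_
    have hG' := isSettled_of_mem_rightReducts A G hG
    obtain ⟨Z, hZ⟩ := hG'.isContext.exists_sub
    have hbox := hG'.preserves_boxWeight.boxWeight_vec A
    exact .focL hA (hZ _ (sort_bvec A)) (h G hG) (hZ _ (sort_vec A))
      (atMostOne_of_boxWeight_eq_zero _ hbox) (ok_of_boxWeight_eq_zero hbox)
  refine ⟨eta, ?_, by rwa [fvec, if_neg (by simp [hA])]⟩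
  rw [leftReducts_of_posb_eq_false hA, hA]
  rintro _ rfl
  exact eta

theorem EtaExpands.atom (b : Bias) (name i : ℕ) : EtaExpands cuts strong (.atom b name i) := by
  cases b
  · refine of_posb_eq_true rfl ?_
    rintro _ rfl
    exact .idP name i
  · refine of_posb_eq_false rfl ?_
    rintro _ rfl
    exact .idQ name i

theorem EtaExpands.prod {A : Ty i} {B : Ty j} (hA : EtaExpands cuts strong A)
    (hB : EtaExpands cuts strong B) : EtaExpands cuts strong (.prod A B) := by
  refine of_posb_eq_true rfl fun X hX => ?_
  obtain ⟨-, hbox, hcomplex⟩ := isSettled_of_mem_leftReducts _ X hX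
  obtain ⟨Y, hY, Z, hZ, rfl⟩ := hX
  exact .prodR (hA.right_focus Y hY) (hB.right_focus Z hZ) (atMostOne_of_boxWeight_eq_zero _ hbox)
    (ok_of_complexWeight_eq_zero _ hcomplex nofun)

theorem EtaExpands.wprod {k : ℕ} (hk : 1 ≤ k ∧ k ≤ i + 1) {A : Ty (i + 1)} {B : Ty j}
    (hA : EtaExpands cuts strong A) (hB : EtaExpands cuts strong B) :
    EtaExpands cuts strong (.wprod k hk A B) := by
  refine of_posb_eq_true rfl fun X hX => ?_
  obtain ⟨-, hbox, hcomplex⟩ := isSettled_of_mem_leftReducts _ X hX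
  obtain ⟨Y, hY, Z, hZ, rfl⟩ := hX
  exact .wprodR k hk (hA.right_focus Y hY) (hB.right_focus Z hZ) (wrap_spec k Y Z)
    (atMostOne_of_boxWeight_eq_zero _ hbox) (ok_of_complexWeight_eq_zero _ hcomplex nofun)

theorem EtaExpands.unitI : EtaExpands cuts strong .unitI := by
  refine of_posb_eq_true rfl ?_
  rintro _ rfl
  exact .unitIR

theorem EtaExpands.unitJ : EtaExpands cuts strong .unitJ := by
  refine of_posb_eq_true rfl ?_
  rintro _ rfl
  exact .unitJR

theorem EtaExpands.oplus {A B : Ty i} (hA : EtaExpands cuts strong A)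
    (hB : EtaExpands cuts strong B) : EtaExpands cuts strong (.oplus A B) := by
  refine of_posb_eq_true rfl fun X hX => ?_
  obtain ⟨-, hbox, hcomplex⟩ := isSettled_of_mem_leftReducts _ X hX
  have hone := atMostOne_of_boxWeight_eq_zero true hbox
  have hok : Ok strong X true i (.oplus A B) := ok_of_complexWeight_eq_zero _ hcomplex nofun
  obtain hX | hX := hX
  · exact .oplusR1 (hA.right_focus X hX) hone hok
  · exact .oplusR2 (hB.right_focus X hX) hone hok

theorem EtaExpands.over {C : Ty (i + j)} {B : Ty j} (hC : EtaExpands cuts strong C)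
    (hB : EtaExpands cuts strong B) : EtaExpands cuts strong (.over C B) := by
  refine of_posb_eq_false rfl fun G hG => ?_
  have hsettled := isSettled_of_mem_rightReducts _ G hG
  obtain ⟨Y, hY, G, hG, rfl⟩ := hG
  have hYsort := (isSettled_of_mem_leftReducts B Y hY).sort_eq
  obtain ⟨Z, hZ⟩ := (isSettled_of_mem_rightReducts C G hG).isContext.exists_sub
  exact .overL (hB.right_focus Y hY) (hZ _ (sort_fvec C)) (hC.left_focus G hG)
    (hZ _ (by rw [sort_append, sort_bvec, hYsort])) (hsettled.atMostOne_bvec _)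
    (hsettled.ok_bvec rfl)

theorem EtaExpands.under {A : Ty i} {C : Ty (i + j)} (hA : EtaExpands cuts strong A)
    (hC : EtaExpands cuts strong C) : EtaExpands cuts strong (.under A C) := by
  refine of_posb_eq_false rfl fun G hG => ?_
  have hsettled := isSettled_of_mem_rightReducts _ G hG
  obtain ⟨Y, hY, G, hG, rfl⟩ := hG
  have hYsort := (isSettled_of_mem_leftReducts A Y hY).sort_eq
  obtain ⟨Z, hZ⟩ := (isSettled_of_mem_rightReducts C G hG).isContext.exists_sub
  exact .underL (hA.right_focus Y hY) (hZ _ (sort_fvec C)) (hC.left_focus G hG)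
    (hZ _ (by rw [sort_append, sort_bvec, hYsort])) (hsettled.atMostOne_bvec _)
    (hsettled.ok_bvec rfl)

theorem EtaExpands.circ {k : ℕ} (hk : 1 ≤ k ∧ k ≤ i + 1) {C : Ty (i + j)} {B : Ty j}
    (hC : EtaExpands cuts strong C) (hB : EtaExpands cuts strong B) :
    EtaExpands cuts strong (.circ k hk C B) := by
  refine of_posb_eq_false rfl fun G hG => ?_
  have hsettled := isSettled_of_mem_rightReducts _ G hG
  obtain ⟨Y, hY, G, hG, rfl⟩ := hG
  have hYsort := (isSettled_of_mem_leftReducts B Y hY).sort_eq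
  obtain ⟨Z, hZ⟩ := (isSettled_of_mem_rightReducts C G hG).isContext.exists_sub
  exact .circL k hk (hB.right_focus Y hY) (hZ _ (sort_fvec C)) (hC.left_focus G hG)
    (wrap_spec k _ Y) (hZ _ ((isJoin_wrap j hk).sort_eq (sort_bvec _) hYsort))
    (hsettled.atMostOne_bvec _) (hsettled.ok_bvec rfl)

theorem EtaExpands.infx {k : ℕ} (hk : 1 ≤ k ∧ k ≤ i + 1) {A : Ty (i + 1)} {C : Ty (i + j)}
    (hA : EtaExpands cuts strong A) (hC : EtaExpands cuts strong C) :
    EtaExpands cuts strong (.infx k hk A C) := by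
  refine of_posb_eq_false rfl fun G hG => ?_
  have hsettled := isSettled_of_mem_rightReducts _ G hG
  obtain ⟨Y, hY, G, hG, rfl⟩ := hG
  have hYsort := (isSettled_of_mem_leftReducts A Y hY).sort_eq
  obtain ⟨Z, hZ⟩ := (isSettled_of_mem_rightReducts C G hG).isContext.exists_sub
  exact .infxL k hk (hA.right_focus Y hY) (hZ _ (sort_fvec C)) (hC.left_focus G hG)
    (wrap_spec k Y _) (hZ _ ((isJoin_wrap j hk).sort_eq hYsort (sort_bvec _)))
    (hsettled.atMostOne_bvec _) (hsettled.ok_bvec rfl)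

theorem EtaExpands.amp {A B : Ty i} (hA : EtaExpands cuts strong A)
    (hB : EtaExpands cuts strong B) : EtaExpands cuts strong (.amp A B) := by
  refine of_posb_eq_false rfl fun G hG => ?_
  have hsettled := isSettled_of_mem_rightReducts _ G hG
  obtain ⟨Z, hZ⟩ := hsettled.isContext.exists_sub
  obtain hG | hG := hG
  · exact .ampL1 (hZ _ (sort_fvec A)) (hA.left_focus G hG) (hZ _ (sort_bvec _))
      (hsettled.atMostOne_bvec _) (hsettled.ok_bvec rfl)
  · exact .ampL2 (hZ _ (sort_fvec B)) (hB.left_focus G hG) (hZ _ (sort_bvec _))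
      (hsettled.atMostOne_bvec _) (hsettled.ok_bvec rfl)

end EtaExpands

theorem etaExpands (cuts strong : Bool) : ∀ {i : ℕ} (A : Ty i), EtaExpands cuts strong A
  | _, .atom b name i => .atom b name i
  | _, .over C B => .over (etaExpands _ _ C) (etaExpands _ _ B)
  | _, .under A C => .under (etaExpands _ _ A) (etaExpands _ _ C)
  | _, .prod A B => .prod (etaExpands _ _ A) (etaExpands _ _ B)
  | _, .unitI => .unitI
  | _, .circ _ hk C B => .circ hk (etaExpands _ _ C) (etaExpands _ _ B)
  | _, .infx _ hk A C => .infx hk (etaExpands _ _ A) (etaExpands _ _ C)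
  | _, .wprod _ hk A B => .wprod hk (etaExpands _ _ A) (etaExpands _ _ B)
  | _, .unitJ => .unitJ
  | _, .amp A B => .amp (etaExpands _ _ A) (etaExpands _ _ B)
  | _, .oplus A B => .oplus (etaExpands _ _ A) (etaExpands _ _ B)

theorem eta_expansion_DAFoc_general (cuts strong : Bool) (i : ℕ) (A : Ty i) :
    DW cuts strong (vec A) false i A :=
  (etaExpands cuts strong A).eta

/-- Eta-expansion in the strongly focalised calculus DAFoc: for every type
`A`, the unfocused sequent `vec(A) ⊢ A` is derivable in DAFoc. -/
theorem eta_expansion_DAFoc :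
    ∀ (i : ℕ) (A : Ty i), DAFoc (vec A) false i A := by
  exact eta_expansion_DAFoc_general false true

end DA
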